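/- Let X be a real Banach space with a Schauder basis (e_n). Then (e_n) is almost greedy if and only if there exists a constant C such that for every x ∈ X, every m ∈ ℕ, every greedy ordering for x, every finite set A ⊂ ℕ with |A| ≤ m and A ⊂ {1,…,α_m(x)−1} ∪ {β_m(x)+1, β_m(x)+2, …}, and all real scalars (a_i)_{i∈A}, one has ‖x − G_m(x)‖ ≤ C‖x − Σ_{i∈A} a_i e_i‖. -/

import Mathlib

open Filter Topology

/-- A Schauder basis of a real normed space `X`, given by basis vectors `e n` together with
biorthogonal (coordinate) functionals `f n`, such that every `x` is the limit of its
partial-sum expansion `∑_{n < N} f n x • e n`. -/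
structure SchauderBasisSys (X : Type*) [NormedAddCommGroup X] [NormedSpace ℝ X] where
  e : ℕ → X
  f : ℕ → X →L[ℝ] ℝ
  biorth : ∀ m n : ℕ, f m (e n) = if m = n then (1 : ℝ) else 0
  expansion : ∀ x : X,
    Filter.Tendsto (fun N : ℕ => ∑ n ∈ Finset.range N, f n x • e n) Filter.atTop (nhds x)

namespace SchauderBasisSys

variable {X : Type*} [NormedAddCommGroup X] [NormedSpace ℝ X]

/-- The coordinate projection onto a finite set `A` of indices: `P_A x = ∑_{i ∈ A} e_i^*(x) e_i`. -/
noncomputable def P (S : SchauderBasisSys X) (A : Finset ℕ) (x : X) : X :=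
  ∑ i ∈ A, S.f i x • S.e i

/-- The indicator vector `1_A = ∑_{i ∈ A} e_i`. -/
noncomputable def ind (S : SchauderBasisSys X) (A : Finset ℕ) : X :=
  ∑ i ∈ A, S.e i

/-- A greedy ordering for `x`: an injection `ρ : ℕ → ℕ` whose range contains the support of `x`
and which rearranges the coordinates of `x` in nonincreasing order of absolute value. -/
def IsGreedyOrdering (S : SchauderBasisSys X) (x : X) (ρ : ℕ → ℕ) : Prop :=
  Function.Injective ρ ∧ (∀ n : ℕ, S.f n x ≠ 0 → n ∈ Set.range ρ) ∧
    ∀ j k : ℕ, j ≤ k → |S.f (ρ k) x| ≤ |S.f (ρ j) x|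

/-- The greedy set `Λ_m(x) = {ρ(0), …, ρ(m-1)}` associated to a greedy ordering `ρ`. -/
def Lam (ρ : ℕ → ℕ) (m : ℕ) : Finset ℕ := (Finset.range m).image ρ

/-- The `m`-th greedy approximation `G_m(x) = ∑_{j < m} e_{ρ(j)}^*(x) e_{ρ(j)}`. -/
noncomputable def G (S : SchauderBasisSys X) (x : X) (ρ : ℕ → ℕ) (m : ℕ) : X :=
  ∑ j ∈ Finset.range m, S.f (ρ j) x • S.e (ρ j)

/-- Quasi-greedy: `‖G_m(x)‖ ≤ K ‖x‖` uniformly. -/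
def QuasiGreedy (S : SchauderBasisSys X) : Prop :=
  ∃ K : ℝ, ∀ (x : X) (ρ : ℕ → ℕ) (m : ℕ),
    S.IsGreedyOrdering x ρ → ‖S.G x ρ m‖ ≤ K * ‖x‖

/-- Conservative: `‖1_A‖ ≤ Γ ‖1_B‖` whenever `|A| ≤ |B|` and `max A < min B`. -/
def Conservative (S : SchauderBasisSys X) : Prop :=
  ∃ Γ : ℝ, ∀ A B : Finset ℕ, A.card ≤ B.card →
    (∀ i ∈ A, ∀ j ∈ B, i < j) → ‖S.ind A‖ ≤ Γ * ‖S.ind B‖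

/-- Reverse conservative: `‖1_A‖ ≤ Γ ‖1_B‖` whenever `|A| ≤ |B|` and `max B < min A`. -/
def ReverseConservative (S : SchauderBasisSys X) : Prop :=
  ∃ Γ : ℝ, ∀ A B : Finset ℕ, A.card ≤ B.card →
    (∀ i ∈ A, ∀ j ∈ B, j < i) → ‖S.ind A‖ ≤ Γ * ‖S.ind B‖

/-- Partially greedy: `‖x - G_m(x)‖ ≤ C ‖∑_{n ≥ m} e_n^*(x) e_n‖ = C ‖x - P_{[0,m)}(x)‖`. -/
def PartiallyGreedy (S : SchauderBasisSys X) : Prop :=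
  ∃ C : ℝ, ∀ (x : X) (ρ : ℕ → ℕ) (m : ℕ), S.IsGreedyOrdering x ρ →
    ‖x - S.G x ρ m‖ ≤ C * ‖x - S.P (Finset.range m) x‖

/-- Almost greedy: `‖x - G_m(x)‖ ≤ C inf{‖x - P_A(x)‖ : |A| ≤ m}`. -/
def AlmostGreedy (S : SchauderBasisSys X) : Prop :=
  ∃ C : ℝ, ∀ (x : X) (ρ : ℕ → ℕ) (m : ℕ) (A : Finset ℕ), S.IsGreedyOrdering x ρ →
    A.card ≤ m → ‖x - S.G x ρ m‖ ≤ C * ‖x - S.P A x‖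

end SchauderBasisSys

namespace SchauderBasisSys

section Helpers

variable {X : Type*} [NormedAddCommGroup X] [NormedSpace ℝ X] (S : SchauderBasisSys X)

theorem coord_sum (A : Finset ℕ) (a : ℕ → ℝ) (n : ℕ) :
    S.f n (∑ i ∈ A, a i • S.e i) = if n ∈ A then a n else 0 := by
  simp [map_sum, S.biorth]

theorem coord_P (A : Finset ℕ) (x : X) (n : ℕ) :
    S.f n (S.P A x) = if n ∈ A then S.f n x else 0 :=
  S.coord_sum A (fun i => S.f i x) n

theorem ext_coord {x y : X} (h : ∀ n, S.f n x = S.f n y) : x = y :=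
  tendsto_nhds_unique (S.expansion x) (by simpa only [h] using S.expansion y)

theorem G_eq_P {ρ : ℕ → ℕ} (hρ : Function.Injective ρ) (x : X) (m : ℕ) :
    S.G x ρ m = S.P (Lam ρ m) x := by
  unfold G P Lam
  rw [Finset.sum_image (fun a _ b _ h => hρ h)]

theorem card_Lam {ρ : ℕ → ℕ} (hρ : Function.Injective ρ) (m : ℕ) : (Lam ρ m).card = m := by
  rw [Lam, Finset.card_image_of_injective _ hρ, Finset.card_range]

/-- `Λ` consists of indices carrying the largest coordinates of `x`. -/
def IsGreedySet (x : X) (Λ : Finset ℕ) : Prop :=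
  ∀ i ∈ Λ, ∀ j ∉ Λ, |S.f j x| ≤ |S.f i x|

/-- All but finitely many coordinates of `x` vanish. -/
def FinSupp (x : X) : Prop := ∃ N : ℕ, ∀ n, N ≤ n → S.f n x = 0

variable {S}

theorem IsGreedyOrdering.isGreedySet_Lam {x : X} {ρ : ℕ → ℕ} (h : S.IsGreedyOrdering x ρ)
    (m : ℕ) : S.IsGreedySet x (Lam ρ m) := by
  intro i hi j hj
  obtain ⟨k, hk, rfl⟩ := Finset.mem_image.1 hi
  by_cases h0 : S.f j x = 0
  · simp [h0]
  obtain ⟨l, rfl⟩ := h.2.1 j h0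
  refine h.2.2 k l ?_
  by_contra hlk
  exact hj (Finset.mem_image_of_mem ρ
    (Finset.mem_range.2 ((not_le.1 hlk).trans (Finset.mem_range.1 hk))))

/-- A greedy set of a finitely supported vector is an initial segment of a greedy ordering. -/
theorem IsGreedySet.exists_isGreedyOrdering {x : X} {Λ : Finset ℕ} (hx : S.FinSupp x)
    (hΛ : S.IsGreedySet x Λ) : ∃ ρ, S.IsGreedyOrdering x ρ ∧ Lam ρ Λ.card = Λ := by
  obtain ⟨N₀, hN₀⟩ := hx
  obtain ⟨N, hN0, hNΛ⟩ : ∃ N, N₀ ≤ N ∧ ∀ i ∈ Λ, i < N :=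
    ⟨max N₀ (Λ.sup id + 1), le_max_left _ _, fun i hi =>
      lt_of_lt_of_le (Nat.lt_succ_of_le (Finset.le_sup (f := id) hi)) (le_max_right _ _)⟩
  let key : Fin N → ℝ := fun i =>
    if (i : ℕ) ∈ Λ then -|S.f i x| - 1 else -|S.f i x|
  let σ := Tuple.sort key
  have hmono : Monotone (key ∘ σ) := Tuple.monotone_sort key
  let ρ : ℕ → ℕ := fun n => if h : n < N then (σ ⟨n, h⟩ : ℕ) else n
  have hρlt (n : ℕ) (h : n < N) : ρ n = σ ⟨n, h⟩ := dif_pos h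
  have hρge (n : ℕ) (h : ¬ n < N) : ρ n = n := dif_neg h
  have hinj : Function.Injective ρ := by
    intro a b hab
    by_cases ha : a < N <;> by_cases hb : b < N
    · rw [hρlt a ha, hρlt b hb] at hab
      simpa using σ.injective (Fin.ext hab)
    · rw [hρlt a ha, hρge b hb] at hab
      have := (σ ⟨a, ha⟩).2
      omega
    · rw [hρge a ha, hρlt b hb] at hab
      have := (σ ⟨b, hb⟩).2
      omega
    · rwa [hρge a ha, hρge b hb] at hab
  have hsurj : Function.Surjective ρ := by
    intro b
    by_cases hb : b < N
    · refine ⟨σ.symm ⟨b, hb⟩, ?_⟩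
      rw [hρlt _ (σ.symm ⟨b, hb⟩).2]
      simp
    · exact ⟨b, hρge b hb⟩
  have hkey (j k : ℕ) (hjk : j ≤ k) (hk : k < N) :
      (if ρ j ∈ Λ then -|S.f (ρ j) x| - 1 else -|S.f (ρ j) x|) ≤
        if ρ k ∈ Λ then -|S.f (ρ k) x| - 1 else -|S.f (ρ k) x| := by
    rw [hρlt j (hjk.trans_lt hk), hρlt k hk]
    exact hmono (show (⟨j, hjk.trans_lt hk⟩ : Fin N) ≤ ⟨k, hk⟩ from hjk)
  have hanti (j k : ℕ) (hjk : j ≤ k) : |S.f (ρ k) x| ≤ |S.f (ρ j) x| := by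
    by_cases hk : k < N
    · have h := hkey j k hjk hk
      by_cases h1 : ρ j ∈ Λ <;> by_cases h2 : ρ k ∈ Λ
      · simp only [h1, h2, if_true] at h; linarith
      · exact hΛ _ h1 _ h2
      · simp only [h1, h2, if_true, if_false] at h; linarith
      · simp only [h1, h2, if_false] at h; linarith
    · rw [hρge k hk, hN₀ k (by omega)]
      simp
  have hseg (j k : ℕ) (hjk : j ≤ k) (hk : ρ k ∈ Λ) : ρ j ∈ Λ := by
    by_cases hkN : k < N
    · by_contra h1
      have h := hkey j k hjk hkN
      simp only [h1, hk, if_true, if_false] at h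
      linarith [hΛ _ hk _ h1]
    · rw [hρge k hkN] at hk
      exact absurd (hNΛ k hk) hkN
  refine ⟨ρ, ⟨hinj, fun n _ => hsurj n, hanti⟩, ?_⟩
  refine Finset.eq_of_subset_of_card_le ?_ (card_Lam hinj _).ge
  intro i hi
  obtain ⟨n, hn, rfl⟩ := Finset.mem_image.1 hi
  by_contra hnot
  have hsub : Λ ⊆ Lam ρ n := by
    intro j hj
    obtain ⟨k, rfl⟩ := hsurj j
    refine Finset.mem_image_of_mem ρ (Finset.mem_range.2 ?_)
    by_contra hkn
    exact hnot (hseg n k (not_lt.1 hkn) hj)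
  have := Finset.card_le_card hsub
  rw [card_Lam hinj] at this
  exact absurd (Finset.mem_range.1 hn) (not_lt.2 this)

theorem finSupp_sum (A : Finset ℕ) (a : ℕ → ℝ) : S.FinSupp (∑ i ∈ A, a i • S.e i) := by
  refine ⟨A.sup id + 1, fun n hn => ?_⟩
  rw [S.coord_sum, if_neg]
  intro hA
  have : n ≤ A.sup id := Finset.le_sup (f := id) hA
  omega

theorem finSupp_P (A : Finset ℕ) (x : X) : S.FinSupp (S.P A x) :=
  finSupp_sum A _

theorem FinSupp.add {x y : X} (hx : S.FinSupp x) (hy : S.FinSupp y) : S.FinSupp (x + y) := by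
  obtain ⟨M, hM⟩ := hx
  obtain ⟨N, hN⟩ := hy
  refine ⟨max M N, fun n hn => ?_⟩
  rw [map_add, hM n (le_of_max_le_left hn), hN n (le_of_max_le_right hn), add_zero]

theorem FinSupp.sub {x y : X} (hx : S.FinSupp x) (hy : S.FinSupp y) : S.FinSupp (x - y) := by
  obtain ⟨M, hM⟩ := hx
  obtain ⟨N, hN⟩ := hy
  refine ⟨max M N, fun n hn => ?_⟩
  rw [map_sub, hM n (le_of_max_le_left hn), hN n (le_of_max_le_right hn), sub_zero]

/-- An estimate for a greedy set extends by density from the partial sums of `x` to `x`. -/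
theorem norm_sub_P_le_of_partial {x w : X} {Λ : Finset ℕ} {C : ℝ} (hΛ : S.IsGreedySet x Λ)
    (h : ∀ᶠ N in atTop, S.IsGreedySet (S.P (Finset.range N) x) Λ →
      ‖S.P (Finset.range N) x - S.P Λ (S.P (Finset.range N) x)‖ ≤
        C * ‖S.P (Finset.range N) x - w‖) :
    ‖x - S.P Λ x‖ ≤ C * ‖x - w‖ := by
  have hlim : Tendsto (fun N => S.P (Finset.range N) x) atTop (𝓝 x) := S.expansion x
  refine le_of_tendsto_of_tendsto (hlim.sub_const (S.P Λ x)).norm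
    ((hlim.sub_const w).norm.const_mul C) ?_
  filter_upwards [h, eventually_gt_atTop (Λ.sup id)] with N hN hsup
  have hmem : ∀ i ∈ Λ, i ∈ Finset.range N := fun i hi =>
    Finset.mem_range.2 (lt_of_le_of_lt (Finset.le_sup (f := id) hi) hsup)
  have hP : S.P Λ (S.P (Finset.range N) x) = S.P Λ x := by
    refine S.ext_coord fun n => ?_
    simp only [coord_P]
    by_cases hn : n ∈ Λ
    · simp only [hn, hmem n hn, if_true]
    · simp only [hn, if_false]
  rw [hP] at hN
  refine hN fun i hi j hj => ?_
  rw [coord_P, coord_P, if_pos (hmem i hi)]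
  split_ifs
  · exact hΛ i hi j hj
  · simp

variable (S)

/-- The partial sum projections are uniformly bounded. -/
theorem exists_norm_P_range_le [CompleteSpace X] :
    ∃ K : ℝ, 0 ≤ K ∧ ∀ N x, ‖S.P (Finset.range N) x‖ ≤ K * ‖x‖ := by
  let T : ℕ → X →L[ℝ] X := fun N => ∑ n ∈ Finset.range N, (S.f n).smulRight (S.e n)
  have hT (N : ℕ) (x : X) : T N x = S.P (Finset.range N) x := by
    simp [T, P]
  obtain ⟨K, hK⟩ : ∃ K, ∀ N, ‖T N‖ ≤ K := by
    refine banach_steinhaus fun x => ?_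
    obtain ⟨R, hR⟩ := (Metric.isBounded_range_of_tendsto _ (S.expansion x)).exists_norm_le
    exact ⟨R, fun N => by rw [hT]; exact hR _ ⟨N, rfl⟩⟩
  refine ⟨K, (norm_nonneg _).trans (hK 0), fun N x => ?_⟩
  rw [← hT]
  exact (T N).le_of_opNorm_le (hK N) x

theorem exists_norm_P_Icc_le [CompleteSpace X] :
    ∃ K : ℝ, 0 ≤ K ∧ ∀ α β x, α ≤ β → ‖S.P (Finset.Icc α β) x‖ ≤ K * ‖x‖ := by
  obtain ⟨K, hK0, hK⟩ := S.exists_norm_P_range_le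
  refine ⟨K + K, by positivity, fun α β x hαβ => ?_⟩
  have h : S.P (Finset.Icc α β) x =
      S.P (Finset.range (β + 1)) x - S.P (Finset.range α) x := by
    refine S.ext_coord fun n => ?_
    simp only [map_sub, coord_P, Finset.mem_Icc, Finset.mem_range]
    split_ifs <;> first | omega | simp
  rw [h, add_mul]
  exact (norm_sub_le _ _).trans (add_le_add (hK _ _) (hK _ _))

/-- The almost greedy inequality for greedy sets of finitely supported vectors. -/
def AlmostGreedyOnSets (C : ℝ) : Prop :=
  ∀ (x : X) (Λ A : Finset ℕ), S.FinSupp x → S.IsGreedySet x Λ → A.card ≤ Λ.card →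
    ‖x - S.P Λ x‖ ≤ C * ‖x - S.P A x‖

/-- The greedy inequality for greedy sets of finitely supported vectors, with approximants
supported outside the interval spanned by the greedy set. -/
def OuterGreedyOnSets (C : ℝ) : Prop :=
  ∀ (x : X) (Λ A : Finset ℕ) (a : ℕ → ℝ), S.FinSupp x → S.IsGreedySet x Λ →
    A.card ≤ Λ.card → (∀ i ∈ A, (∀ j ∈ Λ, i < j) ∨ (∀ j ∈ Λ, j < i)) →
    ‖x - S.P Λ x‖ ≤ C * ‖x - ∑ i ∈ A, a i • S.e i‖

variable {S}

theorem P_empty (x : X) : S.P ∅ x = 0 := by simp [P]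

theorem AlmostGreedyOnSets.exists_outerGreedyOnSets [CompleteSpace X] {C : ℝ} (hC : 0 ≤ C)
    (h : S.AlmostGreedyOnSets C) : ∃ C', S.OuterGreedyOnSets C' := by
  obtain ⟨K, hK0, hK⟩ := S.exists_norm_P_Icc_le
  refine ⟨C + 2 * (C * ((1 + C) * K)), fun x Λ A a hx hΛ hcard hsep => ?_⟩
  have hqg : ∀ (y : X) (B : Finset ℕ), S.FinSupp y → S.IsGreedySet y B →
      ‖y - S.P B y‖ ≤ C * ‖y‖ := fun y B hy hB => by
    simpa [P_empty] using h y B ∅ hy hB (by simp)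
  rcases Λ.eq_empty_or_nonempty with rfl | hne
  · obtain rfl : A = ∅ := by simpa using hcard
    simp only [Finset.sum_empty, sub_zero]
    refine (hqg x ∅ hx hΛ).trans (mul_le_mul_of_nonneg_right ?_ (norm_nonneg _))
    have : 0 ≤ 2 * (C * ((1 + C) * K)) := by positivity
    linarith
  set z := x - ∑ i ∈ A, a i • S.e i with hz
  have hzfs : S.FinSupp z := hx.sub (finSupp_sum A a)
  have hdisj : ∀ i ∈ A, i ∉ Λ := fun i hi hiΛ => by
    rcases hsep i hi with h1 | h1 <;> exact lt_irrefl _ (h1 i hiΛ)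
  have hzA : ∀ i ∉ A, S.f i z = S.f i x := fun i hi => by
    rw [hz, map_sub, coord_sum, if_neg hi, sub_zero]
  obtain ⟨i₀, hi₀, hmin⟩ := Λ.exists_min_image (fun i => |S.f i x|) hne
  set t := |S.f i₀ x| with ht
  have hxt : ∀ j ∉ Λ, |S.f j x| ≤ t := fun j hj => hΛ i₀ hi₀ j hj
  set b : ℕ → ℝ := fun i => (if t < |S.f i z| then S.f i x else S.f i x - S.f i z) / 2 with hb
  set y := ∑ i ∈ A, b i • S.e i with hy
  have hbt : ∀ i ∈ A, |b i| ≤ t := fun i hi => by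
    have h1 := abs_le.1 (hxt i (hdisj i hi))
    simp only [hb]
    split_ifs with h2
    · exact abs_le.2 ⟨by linarith, by linarith⟩
    · have h3 := abs_le.1 (not_lt.1 h2)
      exact abs_le.2 ⟨by linarith, by linarith⟩
  set B := Λ ∪ A.filter (fun i => t < |S.f i z|) with hB
  have hBg : S.IsGreedySet z B := by
    intro i hi j hj
    have h1 : t ≤ |S.f i z| := by
      rcases Finset.mem_union.1 hi with h1 | h1
      · rw [hzA i fun h2 => hdisj i h2 h1]
        exact hmin i h1
      · exact (Finset.mem_filter.1 h1).2.le
    refine le_trans ?_ h1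
    by_cases hjA : j ∈ A
    · by_contra h2
      exact hj (Finset.mem_union_right _ (Finset.mem_filter.2 ⟨hjA, not_le.1 h2⟩))
    · rw [hzA j hjA]
      exact hxt j fun h2 => hj (Finset.mem_union_left _ h2)
  have hdecomp : x - S.P Λ x = (z - S.P B z) + (2 : ℝ) • y := by
    refine S.ext_coord fun n => ?_
    simp only [map_sub, map_add, map_smul, coord_P, hy, coord_sum, smul_eq_mul, hB,
      Finset.mem_union, Finset.mem_filter]
    by_cases hA : n ∈ A
    · have hn := hdisj n hA
      by_cases h2 : t < |S.f n z| <;> simp [hA, hn, hb, h2] <;> ring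
    · by_cases hn : n ∈ Λ <;> simp [hA, hn, hzA n hA]
  have hy_le : ‖y‖ ≤ C * ‖S.P Λ x‖ := by
    have h1 := h (y + S.P Λ x) Λ A ((finSupp_sum A b).add (finSupp_P Λ x)) ?_ hcard
    · have e1 : y + S.P Λ x - S.P Λ (y + S.P Λ x) = y := by
        refine S.ext_coord fun n => ?_
        simp only [map_sub, map_add, coord_P, hy, coord_sum]
        by_cases hA : n ∈ A
        · simp [hA, hdisj n hA]
        · by_cases hn : n ∈ Λ <;> simp [hA, hn]
      have e2 : y + S.P Λ x - S.P A (y + S.P Λ x) = S.P Λ x := by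
        refine S.ext_coord fun n => ?_
        simp only [map_sub, map_add, coord_P, hy, coord_sum]
        by_cases hA : n ∈ A
        · simp [hA, hdisj n hA]
        · by_cases hn : n ∈ Λ <;> simp [hA, hn]
      rwa [e1, e2] at h1
    · intro i hi j hj
      have hiA : i ∉ A := fun h2 => hdisj i h2 hi
      simp only [map_add, hy, coord_sum, coord_P, hi, hj, hiA, if_true, if_false, zero_add,
        add_zero]
      refine le_trans ?_ (hmin i hi)
      split_ifs with h2
      · exact hbt j h2
      · simp [ht]
  have hproj : ‖S.P Λ x‖ ≤ (1 + C) * K * ‖z‖ := by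
    set α := Λ.min' hne
    set β := Λ.max' hne
    set w := S.P (Finset.Icc α β) z with hw
    have hI : ∀ i ∈ Λ, i ∈ Finset.Icc α β := fun i hi =>
      Finset.mem_Icc.2 ⟨Λ.min'_le i hi, Λ.le_max' i hi⟩
    have hIA : ∀ i ∈ Finset.Icc α β, i ∉ A := fun i hi hA => by
      have h1 := Finset.mem_Icc.1 hi
      rcases hsep i hA with h2 | h2
      · exact absurd (h2 _ (Λ.min'_mem hne)) (not_lt.2 h1.1)
      · exact absurd (h2 _ (Λ.max'_mem hne)) (not_lt.2 h1.2)
    have hwΛ : S.P Λ w = S.P Λ x := by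
      refine S.ext_coord fun n => ?_
      simp only [hw, coord_P]
      by_cases hn : n ∈ Λ
      · simp only [hn, hI n hn, if_true, hzA n (hIA n (hI n hn))]
      · simp only [hn, if_false]
    have hwg : S.IsGreedySet w Λ := by
      intro i hi j hj
      rw [hw, coord_P, coord_P, if_pos (hI i hi), hzA i (hIA i (hI i hi))]
      split_ifs with h1
      · rw [hzA j (hIA j h1)]
        exact hΛ i hi j hj
      · simp
    have h1 := hqg w Λ (finSupp_P _ _) hwg
    rw [hwΛ] at h1
    have h2 : ‖S.P Λ x‖ ≤ ‖w‖ + ‖w - S.P Λ x‖ := by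
      simpa using norm_sub_le w (w - S.P Λ x)
    have h3 : ‖w‖ ≤ K * ‖z‖ := hK α β z (Λ.min'_le_max' hne)
    calc ‖S.P Λ x‖ ≤ (1 + C) * ‖w‖ := by linarith
      _ ≤ (1 + C) * (K * ‖z‖) := by gcongr
      _ = (1 + C) * K * ‖z‖ := by ring
  calc ‖x - S.P Λ x‖ = ‖(z - S.P B z) + (2 : ℝ) • y‖ := by rw [hdecomp]
    _ ≤ ‖z - S.P B z‖ + 2 * ‖y‖ := by
      refine (norm_add_le _ _).trans ?_
      rw [norm_smul, Real.norm_ofNat]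
    _ ≤ C * ‖z‖ + 2 * (C * ((1 + C) * K * ‖z‖)) := by
      gcongr
      · exact hqg z B hzfs hBg
      · exact hy_le.trans (by gcongr)
    _ = (C + 2 * (C * ((1 + C) * K))) * ‖z‖ := by ring

/-- Disjointly supported vectors `u` and `v` with `|u_i| ≤ |v_j|` and the support of `u` outside
the interval spanned by the (no smaller) support of `v` satisfy `‖u‖ ≤ C ‖v‖`. -/
theorem OuterGreedyOnSets.norm_sum_le {C : ℝ} (h : S.OuterGreedyOnSets C) {A B : Finset ℕ}
    {u v : ℕ → ℝ} (hcard : A.card ≤ B.card)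
    (hsep : ∀ i ∈ A, (∀ j ∈ B, i < j) ∨ (∀ j ∈ B, j < i))
    (huv : ∀ i ∈ A, ∀ j ∈ B, |u i| ≤ |v j|) :
    ‖∑ i ∈ A, u i • S.e i‖ ≤ C * ‖∑ i ∈ B, v i • S.e i‖ := by
  have hdisj : ∀ i ∈ A, i ∉ B := fun i hi hiB => by
    rcases hsep i hi with h1 | h1 <;> exact lt_irrefl _ (h1 i hiB)
  have h1 := h (∑ i ∈ A, u i • S.e i + ∑ i ∈ B, v i • S.e i) B A u
    ((finSupp_sum A u).add (finSupp_sum B v)) ?_ hcard hsep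
  · have e1 : S.P B (∑ i ∈ A, u i • S.e i + ∑ i ∈ B, v i • S.e i) = ∑ i ∈ B, v i • S.e i := by
      refine S.ext_coord fun n => ?_
      simp only [map_add, coord_P, coord_sum]
      by_cases hA : n ∈ A
      · simp [hdisj n hA]
      · by_cases hn : n ∈ B <;> simp [hA, hn]
    rwa [e1, add_sub_cancel_right, add_sub_cancel_left] at h1
  · intro i hi j hj
    have hiA : i ∉ A := fun h2 => hdisj i h2 hi
    simp only [map_add, coord_sum, hi, hj, hiA, if_true, if_false, zero_add, add_zero]
    split_ifs with h2
    · exact huv j h2 i hi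
    · simp

theorem OuterGreedyOnSets.almostGreedyOnSets {C : ℝ} (hC : 0 ≤ C)
    (h : S.OuterGreedyOnSets C) : S.AlmostGreedyOnSets (C + C * (C * (1 + C))) := by
  intro x Λ A hx hΛ hcard
  set z := x - S.P A x with hz
  have hzc : ∀ n, S.f n z = if n ∈ A then 0 else S.f n x := fun n => by
    rw [hz, map_sub, coord_P]
    split_ifs <;> simp
  have hcard' : (A \ Λ).card ≤ (Λ \ A).card := by
    have h1 := Finset.card_sdiff_add_card_inter A Λ
    have h2 := Finset.card_sdiff_add_card_inter Λ A
    rw [Finset.inter_comm] at h2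
    omega
  have hzg : S.IsGreedySet z (Λ \ A) := by
    intro i hi j hj
    rw [Finset.mem_sdiff] at hi hj
    rw [hzc, hzc, if_neg hi.2]
    split_ifs with h1
    · simp
    · exact hΛ i hi.1 j fun h2 => hj ⟨h2, h1⟩
  have hqg : ‖z - S.P (Λ \ A) z‖ ≤ C * ‖z‖ := by
    simpa using h z (Λ \ A) ∅ 0 (hx.sub (finSupp_P A x)) hzg (by simp) (by simp)
  have hPz : ‖S.P (Λ \ A) z‖ ≤ (1 + C) * ‖z‖ := by
    have : ‖S.P (Λ \ A) z‖ ≤ ‖z‖ + ‖z - S.P (Λ \ A) z‖ := by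
      simpa using norm_sub_le z (z - S.P (Λ \ A) z)
    linarith
  obtain ⟨t, ht1, ht2⟩ : ∃ t : ℝ, (∀ i ∈ A \ Λ, |S.f i x| ≤ |t|) ∧
      ∀ i ∈ Λ \ A, |t| ≤ |S.f i z| := by
    rcases (Λ \ A).eq_empty_or_nonempty with he | hne
    · rw [he, Finset.card_empty, Nat.le_zero, Finset.card_eq_zero] at hcard'
      exact ⟨0, by simp [hcard'], by simp [he]⟩
    · obtain ⟨i₀, hi₀, hmin⟩ := (Λ \ A).exists_min_image (fun i => |S.f i z|) hne
      refine ⟨S.f i₀ z, fun i hi => ?_, hmin⟩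
      rw [Finset.mem_sdiff] at hi hi₀
      rw [hzc, if_neg hi₀.2]
      exact hΛ i₀ hi₀.1 i hi.2
  obtain ⟨D, hDcard, hDgt⟩ : ∃ D : Finset ℕ, D.card = (A \ Λ).card ∧
      ∀ i ∈ A ∪ Λ, ∀ j ∈ D, i < j := by
    refine ⟨Finset.Ico ((A ∪ Λ).sup id + 1) ((A ∪ Λ).sup id + 1 + (A \ Λ).card), by simp, ?_⟩
    intro i hi j hj
    have h1 : i ≤ (A ∪ Λ).sup id := Finset.le_sup (f := id) hi
    have h2 := (Finset.mem_Ico.1 hj).1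
    omega
  have h1 : ‖S.P (A \ Λ) x‖ ≤ C * ‖∑ i ∈ D, t • S.e i‖ :=
    h.norm_sum_le hDcard.ge
      (fun i hi => Or.inl (hDgt i (Finset.mem_union_left _ (Finset.mem_sdiff.1 hi).1)))
      fun i hi _ _ => ht1 i hi
  have h2 : ‖∑ i ∈ D, t • S.e i‖ ≤ C * ‖S.P (Λ \ A) z‖ :=
    h.norm_sum_le (hDcard.le.trans hcard')
      (fun i hi => Or.inr fun j hj =>
        hDgt j (Finset.mem_union_right _ (Finset.mem_sdiff.1 hj).1) i hi)
      fun _ _ j hj => ht2 j hj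
  have hdecomp : x - S.P Λ x = (z - S.P (Λ \ A) z) + S.P (A \ Λ) x := by
    refine S.ext_coord fun n => ?_
    simp only [map_sub, map_add, coord_P, hzc, Finset.mem_sdiff]
    by_cases hA : n ∈ A <;> by_cases hn : n ∈ Λ <;> simp [hA, hn]
  calc ‖x - S.P Λ x‖ ≤ ‖z - S.P (Λ \ A) z‖ + ‖S.P (A \ Λ) x‖ := by
        rw [hdecomp]; exact norm_add_le _ _
    _ ≤ C * ‖z‖ + C * (C * ((1 + C) * ‖z‖)) := by
      gcongr
      exact h1.trans (by gcongr; exact h2.trans (by gcongr))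
    _ = (C + C * (C * (1 + C))) * ‖z‖ := by ring

theorem AlmostGreedy.exists_onSets (h : S.AlmostGreedy) :
    ∃ C, 0 ≤ C ∧ S.AlmostGreedyOnSets C := by
  obtain ⟨C, hC⟩ := h
  refine ⟨|C|, abs_nonneg C, fun x Λ A hx hΛ hcard => ?_⟩
  obtain ⟨ρ, hρ, hLam⟩ := hΛ.exists_isGreedyOrdering hx
  have h1 := hC x ρ Λ.card A hρ hcard
  rw [S.G_eq_P hρ.1, hLam] at h1
  exact h1.trans (mul_le_mul_of_nonneg_right (le_abs_self C) (norm_nonneg _))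

theorem AlmostGreedyOnSets.almostGreedy {C : ℝ} (h : S.AlmostGreedyOnSets C) :
    S.AlmostGreedy := by
  refine ⟨C, fun x ρ m A hρ hcard => ?_⟩
  rw [S.G_eq_P hρ.1]
  refine norm_sub_P_le_of_partial (hρ.isGreedySet_Lam m) ?_
  filter_upwards [eventually_gt_atTop (A.sup id)] with N hN hg
  have h1 := h _ _ A (finSupp_P _ x) hg (by rwa [card_Lam hρ.1])
  have hP : S.P A (S.P (Finset.range N) x) = S.P A x := by
    refine S.ext_coord fun n => ?_
    simp only [coord_P]
    by_cases hn : n ∈ A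
    · have : n < N := lt_of_le_of_lt (Finset.le_sup (f := id) hn) hN
      simp [hn, this]
    · simp only [hn, if_false]
  rwa [hP] at h1

end Helpers

end SchauderBasisSys

open SchauderBasisSys

/-- A Schauder basis of a real Banach space is almost greedy if and only
if there is a constant `C` such that `‖x - G_m(x)‖ ≤ C ‖x - ∑_{i ∈ A} a_i e_i‖` for every
`x`, `m`, every greedy ordering, every finite `A` with `|A| ≤ m` contained in
`{1,…,α_m(x)-1} ∪ {β_m(x)+1,…}` (each element of `A` lies below `min Λ_m(x)` or above
`max Λ_m(x)`), and all real scalars `(a_i)`. -/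
theorem stmt_7 {X : Type*} [NormedAddCommGroup X] [NormedSpace ℝ X] [CompleteSpace X]
    (S : SchauderBasisSys X) :
    S.AlmostGreedy ↔
      ∃ C : ℝ, ∀ (x : X) (ρ : ℕ → ℕ) (m : ℕ) (A : Finset ℕ) (a : ℕ → ℝ),
        S.IsGreedyOrdering x ρ → A.card ≤ m →
        (∀ i ∈ A, (∀ j ∈ Lam ρ m, i < j) ∨ (∀ j ∈ Lam ρ m, j < i)) →
        ‖x - S.G x ρ m‖ ≤ C * ‖x - ∑ i ∈ A, a i • S.e i‖ := by
  constructor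
  · intro h
    obtain ⟨C, hC, hset⟩ := h.exists_onSets
    obtain ⟨C', hC'⟩ := hset.exists_outerGreedyOnSets hC
    refine ⟨C', fun x ρ m A a hρ hcard hsep => ?_⟩
    rw [S.G_eq_P hρ.1]
    refine norm_sub_P_le_of_partial (hρ.isGreedySet_Lam m) (Eventually.of_forall fun N hg => ?_)
    exact hC' _ _ A a (finSupp_P _ x) hg (by rwa [card_Lam hρ.1]) hsep
  · rintro ⟨C, hC⟩
    have hset : S.OuterGreedyOnSets |C| := by
      intro x Λ A a hx hΛ hcard hsep
      obtain ⟨ρ, hρ, hLam⟩ := hΛ.exists_isGreedyOrdering hx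
      have h1 := hC x ρ Λ.card A a hρ hcard (by rwa [hLam])
      rw [S.G_eq_P hρ.1, hLam] at h1
      exact h1.trans (mul_le_mul_of_nonneg_right (le_abs_self C) (norm_nonneg _))
    exact (hset.almostGreedyOnSets (abs_nonneg C)).almostGreedy
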